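/- Let ν > 0, λ > 0, σ := √(λ² + 1/ν), and let a < b be real numbers with Δt := b − a. Set C₁ := −ν⁻¹·sinh(σΔt)/(σ·cosh(σΔt) + λ·sinh(σΔt)) and C₂ := σ/(σ·cosh(σΔt) + λ·sinh(σΔt)). Suppose z : ℝ → ℝ is twice differentiable and satisfies z''(t) = σ²·z(t) for all t ∈ ℝ. Then z'(a) + λ·z(a) = C₁·z(a) + C₂·(z'(b) + λ·z(b)) and z(b) = C₂·z(a) − ν·C₁·(z'(b) + λ·z(b)). -/

import Mathlib

noncomputable section

/-- σ := √(λ² + 1/ν). -/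
def sig (ν lam : ℝ) : ℝ := Real.sqrt (lam ^ 2 + 1 / ν)

/-- C₁ := −ν⁻¹·sinh(σΔt)/(σ·cosh(σΔt) + λ·sinh(σΔt)). -/
def C1 (ν Δt lam : ℝ) : ℝ :=
  -(ν⁻¹ * Real.sinh (sig ν lam * Δt)) /
    (sig ν lam * Real.cosh (sig ν lam * Δt) + lam * Real.sinh (sig ν lam * Δt))

/-- C₂ := σ/(σ·cosh(σΔt) + λ·sinh(σΔt)). -/
def C2 (ν Δt lam : ℝ) : ℝ :=
  sig ν lam /
    (sig ν lam * Real.cosh (sig ν lam * Δt) + lam * Real.sinh (sig ν lam * Δt))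

/-!
The operator `D² - σ²` factors as `(D - σ)(D + σ)`, so `z' + σ z` and `z' - σ z` solve first-order
equations and are propagated from `a` to `b` by `exp (± σ (b - a))`. Adding and subtracting gives
`(z, z')` at `b` in terms of `(z, z')` at `a`. Both interface relations are linear recombinations
of this, divided by `σ cosh + λ sinh`, which never vanishes because `|λ| < σ`.
-/

open Real

section Propagation

variable {E : Type*} [NormedAddCommGroup E] [NormedSpace ℝ E]

theorem eq_exp_smul_of_hasDerivWithinAt_smul {κ : ℝ} {w : ℝ → E} {s : Set ℝ} {a b : ℝ}
    (hw : ∀ t ∈ s, HasDerivWithinAt w (κ • w t) s t) (hs : Convex ℝ s) (ha : a ∈ s) (hb : b ∈ s) :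
    w b = exp (κ * (b - a)) • w a := by
  have hasDerivWithinAt_zero :
      ∀ t ∈ s, HasDerivWithinAt (fun t ↦ exp (κ * (b - t)) • w t) 0 s t := by
    intro t ht
    have exponent : HasDerivWithinAt (fun t ↦ κ * (b - t)) (-κ) s t := by
      simpa using ((hasDerivWithinAt_id t s).const_sub b).const_mul κ
    exact (exponent.exp.smul (hw t ht)).congr_deriv (by module)
  have norm_sub_le :=
    hs.norm_image_sub_le_of_norm_hasDerivWithin_le hasDerivWithinAt_zero
      (fun _ _ ↦ norm_zero.le) ha hb
  simpa [sub_eq_zero] using norm_sub_le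

/-- `z` solves the second-order linear equation `z'' = σ² z` on `s`, recorded as the first-order
system for the pair `(z, z')` with derivatives taken within `s`. -/
structure IsHyperbolicSolutionOn (σ : ℝ) (z z' : ℝ → E) (s : Set ℝ) : Prop where
  hasDerivWithinAt : ∀ t ∈ s, HasDerivWithinAt z (z' t) s t
  hasDerivWithinAt_deriv : ∀ t ∈ s, HasDerivWithinAt z' (σ ^ 2 • z t) s t

namespace IsHyperbolicSolutionOn

variable {σ : ℝ} {z z' : ℝ → E} {s : Set ℝ} {a b : ℝ}

theorem of_deriv_deriv_eq (hz : Differentiable ℝ z) (hz' : Differentiable ℝ (deriv z))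
    (hode : ∀ t, deriv (deriv z) t = σ ^ 2 • z t) :
    IsHyperbolicSolutionOn σ z (deriv z) Set.univ where
  hasDerivWithinAt t _ := (hz t).hasDerivAt.hasDerivWithinAt
  hasDerivWithinAt_deriv t _ := ((hz' t).hasDerivAt.congr_deriv (hode t)).hasDerivWithinAt

theorem neg (h : IsHyperbolicSolutionOn σ z z' s) : IsHyperbolicSolutionOn (-σ) z z' s where
  hasDerivWithinAt := h.hasDerivWithinAt
  hasDerivWithinAt_deriv := by simpa only [neg_sq] using h.hasDerivWithinAt_deriv

theorem deriv_add_smul_eq_exp_smul (h : IsHyperbolicSolutionOn σ z z' s) (hs : Convex ℝ s)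
    (ha : a ∈ s) (hb : b ∈ s) :
    z' b + σ • z b = exp (σ * (b - a)) • (z' a + σ • z a) := by
  refine eq_exp_smul_of_hasDerivWithinAt_smul (w := fun t ↦ z' t + σ • z t) (fun t ht ↦ ?_) hs ha hb
  exact ((h.hasDerivWithinAt_deriv t ht).add ((h.hasDerivWithinAt t ht).const_smul σ)).congr_deriv
    (by module)

theorem deriv_sub_smul_eq_exp_neg_smul (h : IsHyperbolicSolutionOn σ z z' s) (hs : Convex ℝ s)
    (ha : a ∈ s) (hb : b ∈ s) :
    z' b - σ • z b = exp (-(σ * (b - a))) • (z' a - σ • z a) := by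
  simpa only [neg_smul, neg_mul, ← sub_eq_add_neg] using h.neg.deriv_add_smul_eq_exp_smul hs ha hb

theorem deriv_eq_cosh_sinh (h : IsHyperbolicSolutionOn σ z z' s) (hs : Convex ℝ s)
    (ha : a ∈ s) (hb : b ∈ s) :
    z' b = cosh (σ * (b - a)) • z' a + (σ * sinh (σ * (b - a))) • z a := by
  have plus := h.deriv_add_smul_eq_exp_smul hs ha hb
  have minus := h.deriv_sub_smul_eq_exp_neg_smul hs ha hb
  rw [← cosh_add_sinh] at plus
  rw [← cosh_sub_sinh] at minus
  linear_combination (norm := module) (1 / 2 : ℝ) • plus + (1 / 2 : ℝ) • minus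

theorem smul_eq_cosh_sinh (h : IsHyperbolicSolutionOn σ z z' s) (hs : Convex ℝ s)
    (ha : a ∈ s) (hb : b ∈ s) :
    σ • z b = (σ * cosh (σ * (b - a))) • z a + sinh (σ * (b - a)) • z' a := by
  have plus := h.deriv_add_smul_eq_exp_smul hs ha hb
  have minus := h.deriv_sub_smul_eq_exp_neg_smul hs ha hb
  rw [← cosh_add_sinh] at plus
  rw [← cosh_sub_sinh] at minus
  linear_combination (norm := module) (1 / 2 : ℝ) • plus - (1 / 2 : ℝ) • minus

theorem smul_robin_left (h : IsHyperbolicSolutionOn σ z z' s) (hs : Convex ℝ s)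
    (ha : a ∈ s) (hb : b ∈ s) (μ : ℝ) :
    (σ * cosh (σ * (b - a)) + μ * sinh (σ * (b - a))) • (z' a + μ • z a) =
      -((σ ^ 2 - μ ^ 2) * sinh (σ * (b - a))) • z a + σ • (z' b + μ • z b) := by
  linear_combination (norm := module)
    -σ • h.deriv_eq_cosh_sinh hs ha hb - μ • h.smul_eq_cosh_sinh hs ha hb

theorem smul_dirichlet_right (h : IsHyperbolicSolutionOn σ z z' s) (hs : Convex ℝ s)
    (ha : a ∈ s) (hb : b ∈ s) (μ : ℝ) :
    (σ * cosh (σ * (b - a)) + μ * sinh (σ * (b - a))) • z b =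
      σ • z a + sinh (σ * (b - a)) • (z' b + μ • z b) := by
  have backward : σ • z a = (σ * cosh (σ * (b - a))) • z b - sinh (σ * (b - a)) • z' b := by
    have swapped := h.smul_eq_cosh_sinh hs hb ha
    rwa [← neg_sub b a, mul_neg, cosh_neg, sinh_neg, neg_smul, ← sub_eq_add_neg] at swapped
  linear_combination (norm := module) -backward

end IsHyperbolicSolutionOn

end Propagation

section Coefficients

theorem abs_sinh_lt_cosh (x : ℝ) : |sinh x| < cosh x := by
  rw [abs_sinh, ← cosh_abs]
  exact sinh_lt_cosh _

theorem mul_cosh_add_mul_sinh_pos {σ μ : ℝ} (h : |μ| < σ) (x : ℝ) :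
    0 < σ * cosh x + μ * sinh x := by
  have abs_mul_sinh_lt : |μ * sinh x| < σ * cosh x := by
    rw [abs_mul]
    exact mul_lt_mul'' h (abs_sinh_lt_cosh x) (abs_nonneg _) (abs_nonneg _)
  linarith [neg_abs_le (μ * sinh x)]

variable {ν : ℝ} (lam : ℝ)

theorem sig_sq_sub_sq (hν : 0 < ν) : sig ν lam ^ 2 - lam ^ 2 = ν⁻¹ := by
  rw [sig, sq_sqrt (by positivity), one_div, add_sub_cancel_left]

theorem abs_lt_sig (hν : 0 < ν) : |lam| < sig ν lam := by
  rw [sig, ← sqrt_sq_eq_abs]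
  exact sqrt_lt_sqrt (sq_nonneg lam) (lt_add_of_pos_right _ (one_div_pos.mpr hν))

end Coefficients

theorem interface_recurrence_general {E : Type*} [NormedAddCommGroup E] [NormedSpace ℝ E]
    {ν : ℝ} (lam : ℝ) (hν : 0 < ν) {s : Set ℝ} (hs : Convex ℝ s) {a b : ℝ} (ha : a ∈ s) (hb : b ∈ s)
    {z z' : ℝ → E} (hz : IsHyperbolicSolutionOn (sig ν lam) z z' s) :
    z' a + lam • z a = C1 ν (b - a) lam • z a + C2 ν (b - a) lam • (z' b + lam • z b) ∧
      z b = C2 ν (b - a) lam • z a - (ν * C1 ν (b - a) lam) • (z' b + lam • z b) := by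
  have left := hz.smul_robin_left hs ha hb lam
  have right := hz.smul_dirichlet_right hs ha hb lam
  have denom_ne_zero := (mul_cosh_add_mul_sinh_pos (abs_lt_sig lam hν) (sig ν lam * (b - a))).ne'
  rw [sig_sq_sub_sq lam hν, ← eq_inv_smul_iff₀ denom_ne_zero] at left
  rw [← eq_inv_smul_iff₀ denom_ne_zero] at right
  constructor
  · rw [left, C1, C2]
    module
  · have neg_mul_C1 : -(ν * C1 ν (b - a) lam) = sinh (sig ν lam * (b - a)) /
        (sig ν lam * cosh (sig ν lam * (b - a)) + lam * sinh (sig ν lam * (b - a))) := by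
      rw [C1]
      field_simp
    rw [sub_eq_add_neg, ← neg_smul, neg_mul_C1, C2]
    linear_combination (norm := module) right

/-- if z'' = σ² z on ℝ and Δt = b − a, then the interface quantities
satisfy z'(a) + λ z(a) = C₁ z(a) + C₂ (z'(b) + λ z(b)) and
z(b) = C₂ z(a) − ν C₁ (z'(b) + λ z(b)). -/
theorem interface_recurrence (ν lam : ℝ) (hν : 0 < ν) (hlam : 0 < lam)
    (a b : ℝ) (hab : a < b) (Δt : ℝ) (hΔt : Δt = b - a)
    (z : ℝ → ℝ) (hz : Differentiable ℝ z) (hz' : Differentiable ℝ (deriv z))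
    (hode : ∀ t : ℝ, deriv (deriv z) t = sig ν lam ^ 2 * z t) :
    deriv z a + lam * z a =
        C1 ν Δt lam * z a + C2 ν Δt lam * (deriv z b + lam * z b) ∧
    z b = C2 ν Δt lam * z a - ν * C1 ν Δt lam * (deriv z b + lam * z b) := by
  subst hΔt
  exact interface_recurrence_general lam hν convex_univ (Set.mem_univ a) (Set.mem_univ b)
    (.of_deriv_deriv_eq hz hz' hode)
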